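/- Let x > 0 be a real number such that x = x₁ − x₂ for some left-computable reals x₁, x₂ > 0, and suppose x is neither left-computable nor right-computable. Let σ₁² > 0 and σ₂² > 0 be computable reals. Then there exist continuous, even, nonnegative integrable functions f₁, f₂ : ℝ → ℝ with f_i(α) = 0 for |α| ≤ 1 and ∫_ℝ f_i(α) dα = 1 (i = 1, 2) such that for every computable real P > 0 the functions α ↦ log₂(1 + Pα²/σ_i²)·f_i(α) are integrable on ℝ and the secrecy capacity C_S(P) = ∫_ℝ log₂(1 + Pα²/σ₁²) f₁(α) dα − ∫_ℝ log₂(1 + Pα²/σ₂²) f₂(α) dα satisfies C_S(P) = x + u(P) for some computable real u(P); consequently C_S(P) belongs to the class Δ₂, C_S(P) is not left-computable, and C_S(P) is not right-computable. -/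

import Mathlib

open Filter MeasureTheory

/-- A real number `x` is computable if there is a computable sequence of rationals
approximating it to precision `2^(-n)`. -/
def IsComputableReal (x : ℝ) : Prop :=
  ∃ q : ℕ → ℚ, Computable q ∧ ∀ n : ℕ, |x - (q n : ℝ)| ≤ 2 ^ (-(n : ℤ))

/-- A real number `x` is left-computable (`Σ₁`) if it is the limit of a
monotonically nondecreasing computable sequence of rationals. -/
def LeftComputable (x : ℝ) : Prop :=
  ∃ q : ℕ → ℚ, Computable q ∧ (∀ n, q n ≤ q (n + 1)) ∧
    Tendsto (fun n => (q n : ℝ)) atTop (nhds x)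

/-- A real number `x` is right-computable (`Π₁`) if it is the limit of a
monotonically nonincreasing computable sequence of rationals. -/
def RightComputable (x : ℝ) : Prop :=
  ∃ q : ℕ → ℚ, Computable q ∧ (∀ n, q (n + 1) ≤ q n) ∧
    Tendsto (fun n => (q n : ℝ)) atTop (nhds x)

/-- `x ∈ Δ₂` iff `x` is a difference of two left-computable reals. -/
def Delta2 (x : ℝ) : Prop :=
  ∃ a b : ℝ, LeftComputable a ∧ LeftComputable b ∧ x = a - b

/-!
Let `x` be the limit of a nondecreasing computable rational sequence `r`. Rounding
`2 ^ (k + 1) * (r (k + 1) - r k)` down gives computable natural numbers `ℓ k` for which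
`∑ 2 ^ (-(k + 1)) * ℓ k` differs from `x` by a computable real, because the rounding errors form
a series that is dominated by a computable geometric one. A fading density supported on
`σ² 2 ^ ℓ ≤ α² ≤ 2 σ² 2 ^ ℓ` has ergodic capacity `ℓ` plus the average of
`log₂ (2 ^ (-ℓ) + P t)` for `1 ≤ t ≤ 2`; with a fixed Lipschitz profile this offset is bounded,
and Riemann sums compute it uniformly in `ℓ` from `P`. Hence the mixture of such densities with
weights `2 ^ (-(k + 1))` and parameters `ℓ k` has capacity `x` plus a computable real,
simultaneously for all computable `P > 0`. Adding a constant to all `ℓ k` changes the capacity by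
a computable real only and moves the support out of `[-1, 1]`. Using `x₁` for the legitimate
channel and `x₂` for the wiretapper, the secrecy capacity is `x₁ - x₂` plus a computable real,
which preserves one-sided computability in both directions.

The `Primcodable` code of a rational is a rank among the codes of reduced fractions, so that
numerator, denominator, sums and products are found by unbounded search through their decidable
graphs.
-/

section RationalComputability

variable {α : Type*} [Primcodable α]

theorem primrec_nat_pow : Primrec₂ fun a b : ℕ => a ^ b :=
  Primrec₂.unpaired'.1 Nat.Primrec.pow

theorem primrecRel_nat_dvd : PrimrecRel fun a b : ℕ => a ∣ b := by
  have hmod : PrimrecRel fun a b : ℕ => b % a = 0 :=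
    Primrec.eq.comp₂ (Primrec.nat_mod.comp₂ Primrec₂.right Primrec₂.left) (Primrec₂.const 0)
  exact hmod.of_eq fun a b => Nat.dvd_iff_mod_eq_zero.symm

theorem primrec_nat_gcd : Primrec₂ Nat.gcd := by
  have hsearch : Primrec fun p : ℕ × ℕ =>
      Nat.findGreatest (fun k => k ∣ p.1 ∧ k ∣ p.2) (p.1 + p.2) :=
    Primrec.nat_findGreatest (Primrec.nat_add.comp Primrec.fst Primrec.snd)
      ((primrecRel_nat_dvd.comp Primrec.snd (Primrec.fst.comp Primrec.fst)).and
        (primrecRel_nat_dvd.comp Primrec.snd (Primrec.snd.comp Primrec.fst)))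
  refine hsearch.of_eq fun ⟨a, b⟩ => Nat.findGreatest_eq_iff.2
    ⟨?_, fun _ => ⟨Nat.gcd_dvd_left a b, Nat.gcd_dvd_right a b⟩, fun k hk hkab hdvd => ?_⟩
  · rcases a.eq_zero_or_pos with rfl | ha
    · simp
    · exact (Nat.gcd_le_left b ha).trans (Nat.le_add_right a b)
  · have hpos : 0 < Nat.gcd a b := Nat.gcd_pos_iff.2 (by omega)
    exact hk.not_ge (Nat.le_of_dvd hpos (Nat.dvd_gcd hdvd.1 hdvd.2))

theorem primrec_nat_log_two : Primrec (Nat.log 2) := by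
  have hsearch : Primrec fun n : ℕ => Nat.findGreatest (fun k => 2 ^ k ≤ n) n :=
    Primrec.nat_findGreatest Primrec.id
      (Primrec.nat_le.comp (primrec_nat_pow.comp (Primrec.const 2) Primrec.snd) Primrec.fst)
  refine hsearch.of_eq fun n => Nat.findGreatest_eq_iff.2
    ⟨Nat.log_le_self 2 n, fun h => ?_, fun k hk _ hle => ?_⟩
  · exact Nat.pow_log_le_self 2 (by rintro rfl; simp at h)
  · exact hk.not_ge (Nat.le_log_of_pow_le one_lt_two hle)

theorem primrec_int_toNat : Primrec Int.toNat := by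
  have hcode : Primrec fun z : ℤ =>
      if Encodable.encode z % 2 = 0 then Encodable.encode z / 2 else 0 :=
    Primrec.ite
      (Primrec.eq.comp (Primrec.nat_mod.comp Primrec.encode (Primrec.const 2)) (Primrec.const 0))
      (Primrec.nat_div.comp Primrec.encode (Primrec.const 2)) (Primrec.const 0)
  refine hcode.of_eq ?_
  rintro (n | n)
  · change (if 2 * n % 2 = 0 then 2 * n / 2 else 0) = n
    simp
  · change (if (2 * n + 1) % 2 = 0 then (2 * n + 1) / 2 else 0) = 0
    rw [if_neg (by omega)]

theorem primrec_int_toNat_neg : Primrec fun z : ℤ => (-z).toNat := by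
  have hcode : Primrec fun z : ℤ =>
      if Encodable.encode z % 2 = 0 then 0 else (Encodable.encode z + 1) / 2 :=
    Primrec.ite
      (Primrec.eq.comp (Primrec.nat_mod.comp Primrec.encode (Primrec.const 2)) (Primrec.const 0))
      (Primrec.const 0) (Primrec.nat_div.comp (Primrec.succ.comp Primrec.encode) (Primrec.const 2))
  refine hcode.of_eq ?_
  rintro (n | n)
  · change (if 2 * n % 2 = 0 then 0 else (2 * n + 1) / 2) = (-(n : ℤ)).toNat
    simp
  · change (if (2 * n + 1) % 2 = 0 then 0 else (2 * n + 1 + 1) / 2) = n + 1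
    rw [if_neg (by omega)]
    omega

theorem computablePred_eq {β : Type*} [Primcodable β] {f g : α → β} (hf : Computable f)
    (hg : Computable g) : ComputablePred fun a => f a = g a := by
  classical exact (Primrec.eq.decide.to_comp.comp hf hg).computablePred

theorem computable_of_graph {β : Type*} [Denumerable β] {f : α → β}
    (hf : ComputablePred fun p : α × β => f p.1 = p.2) : Computable f := by
  classical
  have hex : ∀ a, ∃ n, f a = Denumerable.ofNat β n := fun a =>
    ⟨Encodable.encode (f a), (Denumerable.ofNat_encode (f a)).symm⟩
  have hcode : ComputablePred fun p : α × ℕ => f p.1 = Denumerable.ofNat β p.2 :=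
    (hf.decide.comp
      (Computable.pair Computable.fst ((Computable.ofNat β).comp Computable.snd))).computablePred
  exact ((Computable.ofNat β).comp (Computable.find hcode hex)).of_eq fun a =>
    (Nat.find_spec (hex a)).symm

/-- The numbers that code a reduced fraction: `n` unpairs to the code of an integer numerator and
a positive denominator coprime to it. The `Primcodable` code of a rational is the rank of its
fraction among these. -/
def IsFractionCode (n : ℕ) : Prop :=
  0 < n.unpair.2 ∧ Nat.gcd (Denumerable.ofNat ℤ n.unpair.1).natAbs n.unpair.2 = 1

instance : DecidablePred IsFractionCode := fun _ => inferInstanceAs (Decidable (_ ∧ _))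

/-- The number coding the reduced fraction of a rational. -/
def fractionCode (q : ℚ) : ℕ := Nat.pair (Encodable.encode q.num) q.den

theorem isFractionCode_fractionCode (q : ℚ) : IsFractionCode (fractionCode q) := by
  simp only [IsFractionCode, fractionCode, Nat.unpair_pair, Denumerable.ofNat_encode]
  exact ⟨q.den_pos, q.reduced⟩

theorem range_fractionCode : Set.range fractionCode = {n | IsFractionCode n} := by
  refine Set.Subset.antisymm (Set.range_subset_iff.2 isFractionCode_fractionCode) fun n hn =>
    ⟨⟨Denumerable.ofNat ℤ n.unpair.1, n.unpair.2, hn.1.ne', hn.2⟩, ?_⟩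
  simp only [fractionCode, Denumerable.encode_ofNat, Nat.pair_unpair]

theorem encode_rat (q : ℚ) :
    @Encodable.encode ℚ Primcodable.toEncodable q = Nat.count IsFractionCode (fractionCode q) := by
  let : DecidablePred (· ∈ Set.range fractionCode) :=
    @Encodable.decidableRangeEncode ℚ Rat.instEncodable
  have hrank : @Encodable.encode ℚ Primcodable.toEncodable q =
      (List.range (fractionCode q)).countP (· ∈ Set.range fractionCode) := rfl
  simp only [hrank, range_fractionCode, Set.mem_ofPred_eq, Nat.count]

theorem primrecPred_isFractionCode : PrimrecPred IsFractionCode := by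
  have hnatAbs : Primrec Int.natAbs :=
    (Primrec.nat_add.comp primrec_int_toNat primrec_int_toNat_neg).of_eq fun z => by omega
  exact (Primrec.nat_lt.comp (Primrec.const 0) (Primrec.snd.comp Primrec.unpair)).and
    (Primrec.eq.comp
      (primrec_nat_gcd.comp
        (hnatAbs.comp ((Primrec.ofNat ℤ).comp (Primrec.fst.comp Primrec.unpair)))
        (Primrec.snd.comp Primrec.unpair))
      (Primrec.const 1))

theorem primrec_count_isFractionCode : Primrec (Nat.count IsFractionCode) := by
  have hrec : Primrec fun n : ℕ =>
      (Nat.rec 0 (fun k c => if IsFractionCode k then c + 1 else c) n : ℕ) :=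
    Primrec.nat_rec₁ 0 (Primrec.ite (primrecPred_isFractionCode.comp Primrec.fst)
      (Primrec.succ.comp Primrec.snd) Primrec.snd)
  refine hrec.of_eq fun n => ?_
  induction n with
  | zero => rfl
  | succ n ih =>
    rw [Nat.count_succ, ← ih]
    dsimp only
    split_ifs <;> rfl

theorem computable_fractionCode : Computable fractionCode := by
  have hcode : PrimrecPred fun p : ℚ × ℕ => IsFractionCode p.2 ∧
      Nat.count IsFractionCode p.2 = @Encodable.encode ℚ Primcodable.toEncodable p.1 :=
    (primrecPred_isFractionCode.comp Primrec.snd).and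
      (Primrec.eq.comp (primrec_count_isFractionCode.comp Primrec.snd)
        (Primrec.encode.comp Primrec.fst))
  refine computable_of_graph (hcode.computablePred.of_eq fun ⟨q, n⟩ => ?_)
  rw [encode_rat]
  refine ⟨fun ⟨hn, hcount⟩ => ?_, fun hn : fractionCode q = n => ?_⟩
  · exact (Nat.count_injective hn (isFractionCode_fractionCode q) hcount).symm
  · exact hn ▸ ⟨isFractionCode_fractionCode q, rfl⟩

theorem computable_rat_num : Computable Rat.num :=
  ((Computable.ofNat ℤ).comp
    (Computable.fst.comp (Computable.unpair.comp computable_fractionCode))).of_eq fun q => by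
      rw [fractionCode, Nat.unpair_pair, Denumerable.ofNat_encode]

theorem computable_rat_den : Computable Rat.den :=
  (Computable.snd.comp (Computable.unpair.comp computable_fractionCode)).of_eq fun q => by
    rw [fractionCode, Nat.unpair_pair]

theorem computable_int_natCast : Computable fun n : ℕ => (n : ℤ) := by
  have hcode : PrimrecPred fun p : ℕ × ℤ => p.2.toNat = p.1 + (-p.2).toNat :=
    Primrec.eq.comp (primrec_int_toNat.comp Primrec.snd)
      (Primrec.nat_add.comp Primrec.fst (primrec_int_toNat_neg.comp Primrec.snd))
  exact computable_of_graph (hcode.computablePred.of_eq fun ⟨n, z⟩ => by dsimp only; omega)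

theorem computable_int_add : Computable₂ fun z w : ℤ => z + w := by
  have hz : Primrec fun p : (ℤ × ℤ) × ℤ => p.1.1 := Primrec.fst.comp Primrec.fst
  have hw : Primrec fun p : (ℤ × ℤ) × ℤ => p.1.2 := Primrec.snd.comp Primrec.fst
  have hv : Primrec fun p : (ℤ × ℤ) × ℤ => p.2 := Primrec.snd
  have hgraph : PrimrecPred fun p : (ℤ × ℤ) × ℤ =>
      p.1.1.toNat + p.1.2.toNat + (-p.2).toNat =
        (-p.1.1).toNat + (-p.1.2).toNat + p.2.toNat :=
    Primrec.eq.comp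
      (Primrec.nat_add.comp (Primrec.nat_add.comp (primrec_int_toNat.comp hz)
        (primrec_int_toNat.comp hw)) (primrec_int_toNat_neg.comp hv))
      (Primrec.nat_add.comp (Primrec.nat_add.comp (primrec_int_toNat_neg.comp hz)
        (primrec_int_toNat_neg.comp hw)) (primrec_int_toNat.comp hv))
  exact computable_of_graph (hgraph.computablePred.of_eq fun ⟨⟨z, w⟩, v⟩ => by dsimp only; omega)

theorem int_mul_eq_iff_toNat (z w v : ℤ) :
    z.toNat * w.toNat + (-z).toNat * (-w).toNat + (-v).toNat =
      z.toNat * (-w).toNat + (-z).toNat * w.toNat + v.toNat ↔ z * w = v := by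
  conv_rhs => rw [← Int.toNat_sub_toNat_neg z, ← Int.toNat_sub_toNat_neg w,
    ← Int.toNat_sub_toNat_neg v]
  zify
  constructor <;> intro h <;> linear_combination h

theorem computable_int_mul : Computable₂ fun z w : ℤ => z * w := by
  have hz : Primrec fun p : (ℤ × ℤ) × ℤ => p.1.1 := Primrec.fst.comp Primrec.fst
  have hw : Primrec fun p : (ℤ × ℤ) × ℤ => p.1.2 := Primrec.snd.comp Primrec.fst
  have hv : Primrec fun p : (ℤ × ℤ) × ℤ => p.2 := Primrec.snd
  have hpos := fun {f : (ℤ × ℤ) × ℤ → ℤ} (hf : Primrec f) => primrec_int_toNat.comp hf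
  have hneg := fun {f : (ℤ × ℤ) × ℤ → ℤ} (hf : Primrec f) => primrec_int_toNat_neg.comp hf
  have hgraph : PrimrecPred fun p : (ℤ × ℤ) × ℤ =>
      p.1.1.toNat * p.1.2.toNat + (-p.1.1).toNat * (-p.1.2).toNat + (-p.2).toNat =
        p.1.1.toNat * (-p.1.2).toNat + (-p.1.1).toNat * p.1.2.toNat + p.2.toNat :=
    Primrec.eq.comp
      (Primrec.nat_add.comp (Primrec.nat_add.comp (Primrec.nat_mul.comp (hpos hz) (hpos hw))
        (Primrec.nat_mul.comp (hneg hz) (hneg hw))) (hneg hv))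
      (Primrec.nat_add.comp (Primrec.nat_add.comp (Primrec.nat_mul.comp (hpos hz) (hneg hw))
        (Primrec.nat_mul.comp (hneg hz) (hpos hw))) (hpos hv))
  exact computable_of_graph
    (hgraph.computablePred.of_eq fun ⟨⟨z, w⟩, v⟩ => int_mul_eq_iff_toNat z w v)

theorem computable_rat_natCast : Computable fun n : ℕ => (n : ℚ) := by
  have hgraph : ComputablePred fun p : ℕ × ℚ => p.2.num = p.1 * p.2.den :=
    computablePred_eq (computable_rat_num.comp Computable.snd)
      (computable_int_mul.comp (computable_int_natCast.comp Computable.fst)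
        (computable_int_natCast.comp (computable_rat_den.comp Computable.snd)))
  refine computable_of_graph (hgraph.of_eq fun ⟨n, q⟩ => ?_)
  have hden : (q.den : ℚ) ≠ 0 := by exact_mod_cast q.den_ne_zero
  conv_rhs => rw [← Rat.num_div_den q, eq_div_iff hden, eq_comm]
  norm_cast

theorem computable_rat_add : Computable₂ fun q r : ℚ => q + r := by
  have hnum := fun {f : (ℚ × ℚ) × ℚ → ℚ} (hf : Computable f) => computable_rat_num.comp hf
  have hden := fun {f : (ℚ × ℚ) × ℚ → ℚ} (hf : Computable f) =>
    computable_int_natCast.comp (computable_rat_den.comp hf)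
  have hq : Computable fun p : (ℚ × ℚ) × ℚ => p.1.1 := Computable.fst.comp Computable.fst
  have hr : Computable fun p : (ℚ × ℚ) × ℚ => p.1.2 := Computable.snd.comp Computable.fst
  have hs : Computable fun p : (ℚ × ℚ) × ℚ => p.2 := Computable.snd
  have hgraph : ComputablePred fun p : (ℚ × ℚ) × ℚ =>
      (p.1.1.num * p.1.2.den + p.1.2.num * p.1.1.den) * p.2.den =
        p.2.num * (p.1.1.den * p.1.2.den) :=
    computablePred_eq
      (computable_int_mul.comp (computable_int_add.comp
        (computable_int_mul.comp (hnum hq) (hden hr))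
        (computable_int_mul.comp (hnum hr) (hden hq))) (hden hs))
      (computable_int_mul.comp (hnum hs) (computable_int_mul.comp (hden hq) (hden hr)))
  refine computable_of_graph (hgraph.of_eq fun ⟨⟨q, r⟩, s⟩ => ?_)
  have hden0 (q : ℚ) : (q.den : ℚ) ≠ 0 := by exact_mod_cast q.den_ne_zero
  conv_rhs => rw [← Rat.num_div_den q, ← Rat.num_div_den r, ← Rat.num_div_den s]
  dsimp only
  rw [div_add_div _ _ (hden0 q) (hden0 r),
    div_eq_div_iff (mul_ne_zero (hden0 q) (hden0 r)) (hden0 s), mul_comm (q.den : ℚ) r.num]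
  norm_cast

theorem computable_rat_mul : Computable₂ fun q r : ℚ => q * r := by
  have hnum := fun {f : (ℚ × ℚ) × ℚ → ℚ} (hf : Computable f) => computable_rat_num.comp hf
  have hden := fun {f : (ℚ × ℚ) × ℚ → ℚ} (hf : Computable f) =>
    computable_int_natCast.comp (computable_rat_den.comp hf)
  have hq : Computable fun p : (ℚ × ℚ) × ℚ => p.1.1 := Computable.fst.comp Computable.fst
  have hr : Computable fun p : (ℚ × ℚ) × ℚ => p.1.2 := Computable.snd.comp Computable.fst
  have hs : Computable fun p : (ℚ × ℚ) × ℚ => p.2 := Computable.snd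
  have hgraph : ComputablePred fun p : (ℚ × ℚ) × ℚ =>
      p.1.1.num * p.1.2.num * p.2.den = p.2.num * (p.1.1.den * p.1.2.den) :=
    computablePred_eq
      (computable_int_mul.comp (computable_int_mul.comp (hnum hq) (hnum hr)) (hden hs))
      (computable_int_mul.comp (hnum hs) (computable_int_mul.comp (hden hq) (hden hr)))
  refine computable_of_graph (hgraph.of_eq fun ⟨⟨q, r⟩, s⟩ => ?_)
  have hden0 (q : ℚ) : (q.den : ℚ) ≠ 0 := by exact_mod_cast q.den_ne_zero
  conv_rhs => rw [← Rat.num_div_den q, ← Rat.num_div_den r, ← Rat.num_div_den s]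
  dsimp only
  rw [div_mul_div_comm, div_eq_div_iff (mul_ne_zero (hden0 q) (hden0 r)) (hden0 s)]
  norm_cast

theorem computable_rat_sub : Computable₂ fun q r : ℚ => q - r := by
  have hgraph : ComputablePred fun p : (ℚ × ℚ) × ℚ => p.1.1 = p.2 + p.1.2 :=
    computablePred_eq (Computable.fst.comp Computable.fst)
      (computable_rat_add.comp Computable.snd (Computable.snd.comp Computable.fst))
  exact computable_of_graph (hgraph.of_eq fun p => sub_eq_iff_eq_add.symm)

theorem rat_natFloor_eq_toNat_div (q : ℚ) : ⌊q⌋₊ = q.num.toNat / q.den := by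
  rw [← Int.floor_toNat, Rat.floor_def']
  rcases le_total 0 q.num with hq | hq
  · obtain ⟨n, hn⟩ := Int.eq_ofNat_of_zero_le hq
    rw [hn, ← Int.natCast_div, Int.toNat_natCast, Int.toNat_natCast]
  · rw [Int.toNat_of_nonpos (Int.ediv_nonpos_of_nonpos_of_neg hq (mod_cast q.den_pos)),
      Int.toNat_of_nonpos hq, Nat.zero_div]

theorem computable_rat_natFloor : Computable fun q : ℚ => ⌊q⌋₊ :=
  (Primrec.nat_div.to_comp.comp (primrec_int_toNat.to_comp.comp computable_rat_num)
    computable_rat_den).of_eq fun q => (rat_natFloor_eq_toNat_div q).symm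

theorem computable_rat_pow : Computable₂ fun (q : ℚ) (n : ℕ) => q ^ n := by
  have hrec : Computable fun p : ℚ × ℕ => (Nat.rec 1 (fun _ s => s * p.1) p.2 : ℚ) :=
    Computable.nat_rec Computable.snd (Computable.const 1)
      (h := fun (p : ℚ × ℕ) (s : ℕ × ℚ) => s.2 * p.1)
      (computable_rat_mul.comp (Computable.snd.comp Computable.snd)
        (Computable.fst.comp Computable.fst))
  refine hrec.of_eq fun ⟨q, n⟩ => ?_
  induction n with
  | zero => exact (pow_zero q).symm
  | succ n ih => exact (congrArg (· * q) ih).trans (pow_succ q n).symm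

theorem computable_rat_sum {N : α → ℕ} {f : α → ℕ → ℚ} (hN : Computable N)
    (hf : Computable₂ f) : Computable fun a => ∑ k ∈ Finset.range (N a), f a k := by
  have hrec : Computable fun a => (Nat.rec 0 (fun k s => s + f a k) (N a) : ℚ) :=
    Computable.nat_rec hN (Computable.const 0) (h := fun (a : α) (p : ℕ × ℚ) => p.2 + f a p.1)
      (computable_rat_add.comp (Computable.snd.comp Computable.snd)
        (hf.comp Computable.fst (Computable.fst.comp Computable.snd)))
  refine hrec.of_eq fun a => ?_
  induction N a with
  | zero => rfl
  | succ n ih => rw [Finset.sum_range_succ, ← ih]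

end RationalComputability

/-- A family of reals is uniformly computable if a single computable function produces, from an
index `a` and a precision `n`, a rational within `2⁻ⁿ` of the `a`-th member. -/
def UniformlyComputable {α : Type*} [Primcodable α] (f : α → ℝ) : Prop :=
  ∃ q : α → ℕ → ℚ, Computable₂ q ∧ ∀ a n, |f a - q a n| ≤ (1 / 2) ^ n

theorem natCast_mul_half_pow_le_one (n : ℕ) : (n : ℝ) * (1 / 2) ^ n ≤ 1 := by
  rw [one_div, inv_pow, mul_inv_le_iff₀ (by positivity), one_mul]
  exact_mod_cast n.lt_two_pow_self.le

theorem abs_logb_two_sub_le {x y c : ℝ} (hc : 0 < c) (hx : c ≤ x) (hy : c ≤ y) :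
    |Real.logb 2 x - Real.logb 2 y| ≤ 2 * |x - y| / c := by
  wlog hxy : y ≤ x generalizing x y
  · rw [abs_sub_comm, abs_sub_comm x]
    exact this hy hx (le_of_not_ge hxy)
  have hy0 : 0 < y := hc.trans_le hy
  have hlog2 : (1 : ℝ) / 2 ≤ Real.log 2 := by linarith [Real.log_two_gt_d9]
  rw [abs_of_nonneg (sub_nonneg.2 (Real.logb_le_logb_of_le one_lt_two hy0 hxy)),
    abs_of_nonneg (sub_nonneg.2 hxy), ← Real.logb_div (hy0.trans_le hxy).ne' hy0.ne', Real.logb,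
    div_le_iff₀ (by positivity)]
  calc Real.log (x / y) ≤ x / y - 1 := Real.log_le_sub_one_of_pos (div_pos (hy0.trans_le hxy) hy0)
    _ = (x - y) / y := by rw [sub_div, div_self hy0.ne']
    _ ≤ (x - y) / c := div_le_div_of_nonneg_left (sub_nonneg.2 hxy) hc hy
    _ = 2 * (x - y) / c * (1 / 2) := by ring
    _ ≤ 2 * (x - y) / c * Real.log 2 := by
      have := sub_nonneg.2 hxy
      gcongr

theorem abs_logb_two_sub_natLog_le {y : ℝ} (hy : 1 ≤ y) (m : ℕ) (hm : 0 < m) :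
    |Real.logb 2 y - Nat.log 2 ⌊y ^ m⌋₊ / m| ≤ 1 / m := by
  have hpow : 1 ≤ y ^ m := one_le_pow₀ hy
  have hlog : (Nat.log 2 ⌊y ^ m⌋₊ : ℤ) = ⌊(m : ℝ) * Real.logb 2 y⌋ := by
    rw [← Int.log_of_one_le_right 2 hpow, ← Real.floor_logb_natCast (by positivity),
      Real.logb_pow, Nat.cast_ofNat]
  have hlogR : (Nat.log 2 ⌊y ^ m⌋₊ : ℝ) = ⌊(m : ℝ) * Real.logb 2 y⌋ := by exact_mod_cast hlog
  have hm0 : (0 : ℝ) < m := Nat.cast_pos.2 hm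
  have hfract : Real.logb 2 y - Nat.log 2 ⌊y ^ m⌋₊ / m = Int.fract (m * Real.logb 2 y) / m := by
    rw [hlogR, Int.fract]
    field_simp
  rw [hfract, abs_of_nonneg (div_nonneg (Int.fract_nonneg _) hm0.le)]
  exact div_le_div_of_nonneg_right (Int.fract_lt_one _).le hm0.le

namespace UniformlyComputable

variable {α β : Type*} [Primcodable α] [Primcodable β] {f g : α → ℝ}

theorem comp (hf : UniformlyComputable f) {φ : β → α} (hφ : Computable φ) :
    UniformlyComputable fun b => f (φ b) := by
  obtain ⟨q, hq, hfq⟩ := hf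
  exact ⟨fun b => q (φ b), hq.comp (hφ.comp Computable.fst) Computable.snd, fun b => hfq (φ b)⟩

theorem ratCast {q : α → ℚ} (hq : Computable q) : UniformlyComputable fun a => (q a : ℝ) :=
  ⟨fun a _ => q a, hq.comp Computable.fst, fun a n => by simp⟩

theorem natCast {m : α → ℕ} (hm : Computable m) : UniformlyComputable fun a => (m a : ℝ) := by
  simpa only [Rat.cast_natCast] using ratCast (computable_rat_natCast.comp hm)

theorem of_approx {h : α × ℕ → ℝ} {C : α → ℕ} (hh : UniformlyComputable h) (hC : Computable C)
    (hfh : ∀ a n, |f a - h (a, n)| ≤ C a * (1 / 2) ^ n) : UniformlyComputable f := by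
  obtain ⟨q, hq, hhq⟩ := hh
  have hN : Computable fun p : α × ℕ => p.2 + (C p.1 + 1) :=
    Primrec.nat_add.to_comp.comp Computable.snd (Computable.succ.comp (hC.comp Computable.fst))
  refine ⟨fun a n => q (a, n + (C a + 1)) (n + (C a + 1)),
    hq.comp (Computable.pair Computable.fst hN) hN, fun a n => ?_⟩
  set N := n + (C a + 1) with hN_def
  calc |f a - q (a, N) N| ≤ |f a - h (a, N)| + |h (a, N) - q (a, N) N| := abs_sub_le _ _ _
    _ ≤ C a * (1 / 2) ^ N + (1 / 2) ^ N := add_le_add (hfh a N) (hhq (a, N) N)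
    _ = (C a + 1 : ℕ) * (1 / 2) ^ (C a + 1) * (1 / 2) ^ n := by push_cast [hN_def]; ring
    _ ≤ 1 * (1 / 2) ^ n := by gcongr; exact natCast_mul_half_pow_le_one _
    _ = (1 / 2) ^ n := one_mul _

theorem exists_computable_bound (hf : UniformlyComputable f) :
    ∃ B : α → ℕ, Computable B ∧ ∀ a, |f a| ≤ B a := by
  obtain ⟨q, hq, hfq⟩ := hf
  have hq0 : Computable fun a => q a 0 := hq.comp Computable.id (Computable.const 0)
  refine ⟨fun a => ⌊q a 0 * q a 0⌋₊ + 3, (Primrec.nat_add.to_comp.comp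
    (computable_rat_natFloor.comp (computable_rat_mul.comp hq0 hq0)) (Computable.const 3)),
    fun a => ?_⟩
  have hfloor : ((q a 0 : ℝ) * q a 0) < ⌊q a 0 * q a 0⌋₊ + 1 := by
    exact_mod_cast Nat.lt_floor_add_one (q a 0 * q a 0)
  have hfa := abs_le.1 (hfq a 0)
  rw [pow_zero] at hfa
  push_cast
  exact abs_le.2 ⟨by nlinarith, by nlinarith⟩

theorem add (hf : UniformlyComputable f) (hg : UniformlyComputable g) :
    UniformlyComputable fun a => f a + g a := by
  obtain ⟨q, hq, hfq⟩ := hf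
  obtain ⟨r, hr, hgr⟩ := hg
  refine of_approx (C := fun _ => 2) (ratCast (computable_rat_add.comp hq hr))
    (Computable.const 2) fun a n => ?_
  push_cast
  rw [add_sub_add_comm, two_mul]
  exact (abs_add_le _ _).trans (add_le_add (hfq a n) (hgr a n))

theorem mul (hf : UniformlyComputable f) (hg : UniformlyComputable g) :
    UniformlyComputable fun a => f a * g a := by
  obtain ⟨A, hA, hfA⟩ := hf.exists_computable_bound
  obtain ⟨B, hB, hgB⟩ := hg.exists_computable_bound
  obtain ⟨q, hq, hfq⟩ := hf
  obtain ⟨r, hr, hgr⟩ := hg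
  refine of_approx (ratCast (computable_rat_mul.comp hq hr))
    (Computable.succ.comp (Primrec.nat_add.to_comp.comp hA hB)) fun a n => ?_
  have hr_le : |(r a n : ℝ)| ≤ B a + 1 := by
    calc |(r a n : ℝ)| = |g a - (g a - r a n)| := by rw [sub_sub_cancel]
      _ ≤ |g a| + |g a - r a n| := abs_sub _ _
      _ ≤ B a + 1 :=
        add_le_add (hgB a) ((hgr a n).trans (pow_le_one₀ (by norm_num) (by norm_num)))
  push_cast
  calc |f a * g a - q a n * r a n| = |f a * (g a - r a n) + (f a - q a n) * r a n| := by ring_nf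
    _ ≤ |f a| * |g a - r a n| + |f a - q a n| * |(r a n : ℝ)| := by
      simpa only [abs_mul] using abs_add_le (f a * (g a - r a n)) ((f a - q a n) * r a n)
    _ ≤ A a * (1 / 2) ^ n + (1 / 2) ^ n * (B a + 1) := by
      gcongr
      exacts [hfA a, hgr a n, hfq a n]
    _ = (A a + B a + 1) * (1 / 2) ^ n := by ring

theorem neg (hf : UniformlyComputable f) : UniformlyComputable fun a => -f a := by
  simpa using (ratCast (Computable.const (-1))).mul hf

theorem sub (hf : UniformlyComputable f) (hg : UniformlyComputable g) :
    UniformlyComputable fun a => f a - g a := by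
  simpa only [sub_eq_add_neg] using hf.add hg.neg

theorem half_pow {m : α → ℕ} (hm : Computable m) :
    UniformlyComputable fun a => (1 / 2 : ℝ) ^ m a := by
  have hq : Computable fun a => (1 / 2 : ℚ) ^ m a :=
    computable_rat_pow.comp (Computable.const (1 / 2)) hm
  simpa only [Rat.cast_pow, Rat.cast_div, Rat.cast_one, Rat.cast_ofNat] using ratCast hq

theorem logb_two_ratCast {y : α → ℚ} (hy : Computable y) (hy1 : ∀ a, 1 ≤ y a) :
    UniformlyComputable fun a => Real.logb 2 (y a) := by
  have htwo : Computable fun p : α × ℕ => 2 ^ p.2 :=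
    primrec_nat_pow.to_comp.comp (Computable.const 2) Computable.snd
  have hlog : Computable fun p : α × ℕ => Nat.log 2 ⌊y p.1 ^ 2 ^ p.2⌋₊ :=
    primrec_nat_log_two.to_comp.comp (computable_rat_natFloor.comp
      (computable_rat_pow.comp (hy.comp Computable.fst) htwo))
  refine of_approx (C := fun _ => 1) ((natCast hlog).mul (half_pow Computable.snd))
    (Computable.const 1) fun a n => ?_
  have hfloor : ⌊(y a : ℝ) ^ 2 ^ n⌋₊ = ⌊y a ^ 2 ^ n⌋₊ := by
    rw [← Int.floor_toNat, ← Int.floor_toNat, ← Rat.cast_pow, Rat.floor_cast]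
  have happrox := abs_logb_two_sub_natLog_le (y := y a) (by exact_mod_cast hy1 a) (2 ^ n)
    (by positivity)
  rw [hfloor, Nat.cast_pow, Nat.cast_ofNat] at happrox
  simpa [div_eq_mul_inv] using happrox

theorem logb_two (hf : UniformlyComputable f) (hf1 : ∀ a, 1 ≤ f a) :
    UniformlyComputable fun a => Real.logb 2 (f a) := by
  obtain ⟨q, hq, hfq⟩ := hf
  -- Adding the error allowance to the approximants keeps them at least `1`.
  have hr : Computable fun p : α × ℕ => q p.1 p.2 + (1 / 2) ^ p.2 :=
    computable_rat_add.comp hq (computable_rat_pow.comp (Computable.const (1 / 2)) Computable.snd)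
  have hr1 (a : α) (n : ℕ) : f a ≤ (q a n + (1 / 2) ^ n : ℚ) := by
    push_cast
    linarith [(abs_le.1 (hfq a n)).2]
  refine of_approx (C := fun _ => 4)
    (logb_two_ratCast hr fun p => by exact_mod_cast (hf1 p.1).trans (hr1 p.1 p.2))
    (Computable.const 4) fun a n => ?_
  refine (abs_logb_two_sub_le one_pos (hf1 a) ((hf1 a).trans (hr1 a n))).trans ?_
  rw [abs_sub_comm, abs_of_nonneg (sub_nonneg.2 (hr1 a n))]
  push_cast
  linarith [(abs_le.1 (hfq a n)).1]

theorem sum_range {h : α × ℕ → ℝ} (hh : UniformlyComputable h) {N : α → ℕ} (hN : Computable N) :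
    UniformlyComputable fun a => ∑ k ∈ Finset.range (N a), h (a, k) := by
  obtain ⟨q, hq, hhq⟩ := hh
  have hsum : Computable fun p : α × ℕ => ∑ k ∈ Finset.range (N p.1), q (p.1, k) p.2 :=
    computable_rat_sum (hN.comp Computable.fst)
      (hq.comp (Computable.pair (Computable.fst.comp Computable.fst) Computable.snd)
        (Computable.snd.comp Computable.fst))
  refine of_approx (ratCast hsum) hN fun a n => ?_
  push_cast
  rw [← Finset.sum_sub_distrib]
  calc |∑ k ∈ Finset.range (N a), (h (a, k) - q (a, k) n)|
      ≤ ∑ k ∈ Finset.range (N a), |h (a, k) - q (a, k) n| := Finset.abs_sum_le_sum_abs _ _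
    _ ≤ ∑ _k ∈ Finset.range (N a), (1 / 2 : ℝ) ^ n := Finset.sum_le_sum fun k _ => hhq (a, k) n
    _ = N a * (1 / 2) ^ n := by rw [Finset.sum_const, Finset.card_range, nsmul_eq_mul]

theorem of_hasSum {h : α × ℕ → ℝ} (hh : UniformlyComputable h) {C : α → ℕ} (hC : Computable C)
    (hbound : ∀ a k, |h (a, k)| ≤ C a * (1 / 2) ^ k) (hf : ∀ a, HasSum (fun k => h (a, k)) (f a)) :
    UniformlyComputable f := by
  have hpartial : UniformlyComputable fun p : α × ℕ => ∑ k ∈ Finset.range p.2, h (p.1, k) :=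
    sum_range (h := fun p : (α × ℕ) × ℕ => h (p.1.1, p.2))
      (hh.comp (Computable.pair (Computable.fst.comp Computable.fst) Computable.snd))
      Computable.snd
  refine of_approx hpartial (Primrec.nat_mul.to_comp.comp (Computable.const 2) hC) fun a n => ?_
  have htail := norm_sub_le_of_geometric_bound_of_hasSum (by norm_num) (hbound a) (hf a) n
  rw [← Real.norm_eq_abs, norm_sub_rev]
  refine htail.trans_eq ?_
  push_cast
  ring

end UniformlyComputable

theorem abs_integral_sub_mul_le {F : ℝ → ℝ} {C : NNReal} {a b : ℝ} (hab : a ≤ b)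
    (hF : LipschitzOnWith C F (Set.Icc a b)) :
    |(∫ t in a..b, F t) - F a * (b - a)| ≤ C * (b - a) * (b - a) := by
  have hconst : F a * (b - a) = ∫ _t in a..b, F a := by
    rw [intervalIntegral.integral_const, smul_eq_mul, mul_comm]
  have hint : IntervalIntegrable F volume a b := hF.continuousOn.intervalIntegrable_of_Icc hab
  have hbound : ∀ t ∈ Set.uIoc a b, ‖F t - F a‖ ≤ C * (b - a) := by
    intro t ht
    rw [Set.uIoc_of_le hab] at ht
    refine (hF.norm_sub_le (Set.Ioc_subset_Icc_self ht) (Set.left_mem_Icc.2 hab)).trans ?_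
    rw [Real.norm_eq_abs, abs_of_nonneg (sub_nonneg.2 ht.1.le)]
    gcongr
    exact ht.2
  rw [hconst, ← intervalIntegral.integral_sub hint intervalIntegrable_const]
  simpa only [Real.norm_eq_abs, abs_of_nonneg (sub_nonneg.2 hab)] using
    intervalIntegral.norm_integral_le_of_norm_le_const hbound

theorem abs_integral_sub_riemannSum_le {F : ℝ → ℝ} {C : NNReal}
    (hF : LipschitzOnWith C F (Set.Icc 0 1)) {N : ℕ} (hN : 0 < N) :
    |(∫ t in (0 : ℝ)..1, F t) - (∑ i ∈ Finset.range N, F (i / N)) / N| ≤ C / N := by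
  have hN0 : (0 : ℝ) < N := Nat.cast_pos.2 hN
  have hmesh (i : ℕ) : ((i + 1 : ℕ) : ℝ) / N - i / N = 1 / N := by push_cast; ring
  have hle (i : ℕ) : (i : ℝ) / N ≤ (i + 1 : ℕ) / N := by gcongr; exact i.le_succ
  have hlip (i : ℕ) (hi : i < N) : LipschitzOnWith C F (Set.Icc (i / N) ((i + 1 : ℕ) / N)) :=
    hF.mono (Set.Icc_subset_Icc (by positivity) ((div_le_one hN0).2 (by exact_mod_cast hi)))
  have hsplit : ∫ t in (0 : ℝ)..1, F t =
      ∑ i ∈ Finset.range N, ∫ t in (i / N : ℝ)..((i + 1 : ℕ) / N), F t := by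
    rw [intervalIntegral.sum_integral_adjacent_intervals (a := fun i : ℕ => (i : ℝ) / N)
      fun i hi => (hlip i hi).continuousOn.intervalIntegrable_of_Icc (hle i),
      Nat.cast_zero, zero_div, div_self hN0.ne']
  have hpiece (i : ℕ) (hi : i ∈ Finset.range N) :
      |(∫ t in (i / N : ℝ)..((i + 1 : ℕ) / N), F t) - F (i / N) / N| ≤ C * (1 / N) * (1 / N) := by
    simpa only [hmesh, mul_one_div (F _)] using
      abs_integral_sub_mul_le (hle i) (hlip i (Finset.mem_range.1 hi))
  rw [hsplit, Finset.sum_div, ← Finset.sum_sub_distrib]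
  calc _ ≤ ∑ _i ∈ Finset.range N, C * (1 / N) * (1 / N : ℝ) :=
        (Finset.abs_sum_le_sum_abs _ _).trans (Finset.sum_le_sum hpiece)
    _ = C / N := by
      rw [Finset.sum_const, Finset.card_range, nsmul_eq_mul]
      field_simp

namespace UniformlyComputable

theorem integral {α : Type*} [Primcodable α] {F : α → ℝ → ℝ} {C : α → ℕ}
    (hF : UniformlyComputable fun p : α × ℕ × ℕ => F p.1 (p.2.1 / 2 ^ p.2.2)) (hC : Computable C)
    (hlip : ∀ a, LipschitzOnWith (C a) (F a) (Set.Icc 0 1)) :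
    UniformlyComputable fun a => ∫ t in (0 : ℝ)..1, F a t := by
  have hpow : Computable fun p : α × ℕ => 2 ^ p.2 :=
    primrec_nat_pow.to_comp.comp (Computable.const 2) Computable.snd
  have hsum : UniformlyComputable fun p : α × ℕ =>
      ∑ i ∈ Finset.range (2 ^ p.2), F p.1 (i / 2 ^ p.2) :=
    sum_range (h := fun p : (α × ℕ) × ℕ => F p.1.1 (p.2 / 2 ^ p.1.2))
      (hF.comp (Computable.pair (Computable.fst.comp Computable.fst)
        (Computable.pair Computable.snd (Computable.snd.comp Computable.fst)))) hpow
  refine of_approx (hsum.mul (half_pow Computable.snd)) hC fun a n => ?_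
  simpa [div_eq_mul_inv] using abs_integral_sub_riemannSum_le (hlip a) (Nat.two_pow_pos n)

end UniformlyComputable

theorem IsComputableReal.uniformlyComputable_const {α : Type*} [Primcodable α] {x : ℝ}
    (hx : IsComputableReal x) : UniformlyComputable fun _ : α => x := by
  obtain ⟨q, hq, hxq⟩ := hx
  refine ⟨fun _ => q, hq.comp Computable.snd, fun _ n => ?_⟩
  simpa only [one_div, inv_pow, zpow_neg, zpow_natCast] using hxq n

theorem UniformlyComputable.isComputableReal {α : Type*} [Primcodable α] {f : α → ℝ}
    (hf : UniformlyComputable f) (a : α) : IsComputableReal (f a) := by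
  obtain ⟨q, hq, hfq⟩ := hf
  refine ⟨q a, hq.comp (Computable.const a) Computable.id, fun n => ?_⟩
  simpa only [one_div, inv_pow, zpow_neg, zpow_natCast] using hfq a n

theorem IsComputableReal.neg {x : ℝ} (hx : IsComputableReal x) : IsComputableReal (-x) :=
  (hx.uniformlyComputable_const (α := Unit)).neg.isComputableReal ()

theorem IsComputableReal.add {x y : ℝ} (hx : IsComputableReal x) (hy : IsComputableReal y) :
    IsComputableReal (x + y) :=
  ((hx.uniformlyComputable_const (α := Unit)).add
    hy.uniformlyComputable_const).isComputableReal ()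

theorem IsComputableReal.sub {x y : ℝ} (hx : IsComputableReal x) (hy : IsComputableReal y) :
    IsComputableReal (x - y) :=
  sub_eq_add_neg x y ▸ hx.add hy.neg

theorem UniformlyComputable.exists_hasSum {h : ℕ → ℝ} (hh : UniformlyComputable h) {C : ℕ}
    (hbound : ∀ k, |h k| ≤ C * (1 / 2) ^ k) : ∃ u, IsComputableReal u ∧ HasSum h u := by
  have hsum : HasSum h (∑' k, h k) :=
    (Summable.of_norm_bounded (summable_geometric_two.mul_left (C : ℝ)) hbound).hasSum
  exact ⟨_, (UniformlyComputable.of_hasSum (α := Unit) (C := fun _ => C) (hh.comp Computable.snd)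
    (Computable.const C) (fun _ => hbound) fun _ => hsum).isComputableReal (), hsum⟩

section LeftComputable

variable {x y u : ℝ}

theorem LeftComputable.add (hx : LeftComputable x) (hy : LeftComputable y) :
    LeftComputable (x + y) := by
  obtain ⟨q, hq, hq_mono, hq_lim⟩ := hx
  obtain ⟨r, hr, hr_mono, hr_lim⟩ := hy
  refine ⟨fun n => q n + r n, computable_rat_add.comp hq hr,
    fun n => add_le_add (hq_mono n) (hr_mono n), ?_⟩
  simpa only [Rat.cast_add] using hq_lim.add hr_lim

theorem rightComputable_iff_leftComputable_neg : RightComputable x ↔ LeftComputable (-x) := by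
  have hneg {q : ℕ → ℚ} (hq : Computable q) : Computable fun n => -q n := by
    simpa only [zero_sub] using computable_rat_sub.comp (Computable.const 0) hq
  constructor
  all_goals
    rintro ⟨q, hq, hq_mono, hq_lim⟩
    exact ⟨fun n => -q n, hneg hq, fun n => neg_le_neg (hq_mono n), by simpa using hq_lim.neg⟩

theorem IsComputableReal.leftComputable (hu : IsComputableReal u) : LeftComputable u := by
  obtain ⟨q, hq, huq⟩ := hu.uniformlyComputable_const (α := Unit)
  have hq' : Computable (q ()) := hq.comp (Computable.const ()) Computable.id
  have herr : Computable fun n : ℕ => 3 * (1 / 2 : ℚ) ^ n :=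
    computable_rat_mul.comp (Computable.const 3)
      (computable_rat_pow.comp (Computable.const (1 / 2)) Computable.id)
  have hhalf : Tendsto (fun n : ℕ => (1 / 2 : ℝ) ^ n) atTop (nhds 0) :=
    tendsto_pow_atTop_nhds_zero_of_lt_one (by norm_num) (by norm_num)
  -- Lowering an approximant of precision `2⁻ⁿ` by `3 * 2⁻ⁿ` makes the sequence monotone.
  refine ⟨fun n => q () n - 3 * (1 / 2) ^ n, computable_rat_sub.comp hq' herr, fun n => ?_, ?_⟩
  · have hn := (abs_le.1 (huq () n)).1
    have hsucc := (abs_le.1 (huq () (n + 1))).2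
    rw [← Rat.cast_le (K := ℝ)]
    push_cast
    rw [pow_succ] at hsucc ⊢
    linarith
  · have hqu : Tendsto (fun n => (q () n : ℝ)) atTop (nhds u) :=
      tendsto_iff_norm_sub_tendsto_zero.2 <| squeeze_zero (fun _ => norm_nonneg _)
        (fun n => by rw [Real.norm_eq_abs, abs_sub_comm]; exact huq () n) hhalf
    simpa using hqu.sub (hhalf.const_mul 3)

theorem leftComputable_add_iff (hu : IsComputableReal u) :
    LeftComputable (x + u) ↔ LeftComputable x :=
  ⟨fun h => by simpa using h.add hu.neg.leftComputable, fun h => h.add hu.leftComputable⟩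

theorem rightComputable_add_iff (hu : IsComputableReal u) :
    RightComputable (x + u) ↔ RightComputable x := by
  rw [rightComputable_iff_leftComputable_neg, rightComputable_iff_leftComputable_neg, neg_add,
    leftComputable_add_iff hu.neg]

theorem hasSum_sub_of_monotone_tendsto {r : ℕ → ℝ} (hr : Monotone r)
    (hx : Tendsto r atTop (nhds x)) : HasSum (fun k => r (k + 1) - r k) (x - r 0) := by
  rw [hasSum_iff_tendsto_nat_of_nonneg fun k => sub_nonneg.2 (hr k.le_succ)]
  simpa only [Finset.sum_range_sub] using hx.sub_const (r 0)

theorem exists_nat_dyadic_hasSum_sub {q : ℕ → ℚ} (hq : Computable q) (hq0 : ∀ k, 0 ≤ q k) :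
    ∃ m : ℕ → ℕ, Computable m ∧ ∃ u, IsComputableReal u ∧
      HasSum (fun k => (1 / 2) ^ (k + 1) * (m k : ℝ) - q k) u := by
  let d (k : ℕ) : ℚ := 2 ^ (k + 1) * q k
  have hd : Computable d := computable_rat_mul.comp
    (computable_rat_pow.comp (Computable.const 2) Computable.succ) hq
  have hfloor : Computable fun k => ⌊d k⌋₊ := computable_rat_natFloor.comp hd
  let h (k : ℕ) : ℝ := (1 / 2) ^ (k + 1) * (⌊d k⌋₊ : ℝ) - q k
  have hh : UniformlyComputable h :=
    ((UniformlyComputable.half_pow Computable.succ).mul (.natCast hfloor)).sub (.ratCast hq)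
  have hh_bound (k : ℕ) : |h k| ≤ 1 * (1 / 2) ^ k := by
    have hle : (⌊d k⌋₊ : ℝ) ≤ d k := by
      exact_mod_cast Nat.floor_le (mul_nonneg (by positivity) (hq0 k))
    have hlt : (d k : ℝ) < ⌊d k⌋₊ + 1 := by exact_mod_cast Nat.lt_floor_add_one (d k)
    have hh_eq : h k = (1 / 2) ^ (k + 1) * (⌊d k⌋₊ - d k) := by
      simp only [h, d, Rat.cast_mul, Rat.cast_pow, Rat.cast_ofNat, mul_sub, ← mul_assoc, ← mul_pow]
      norm_num
    rw [hh_eq, abs_mul, abs_of_nonneg (by positivity), mul_comm]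
    exact mul_le_mul (abs_le.2 ⟨by linarith, by linarith⟩)
      (pow_le_pow_of_le_one (by norm_num) (by norm_num) k.le_succ) (by positivity) zero_le_one
  exact ⟨fun k => ⌊d k⌋₊, hfloor, hh.exists_hasSum (C := 1) (by simpa using hh_bound)⟩

theorem LeftComputable.exists_hasSum_dyadic (hx : LeftComputable x) (j : ℕ) :
    ∃ ℓ : ℕ → ℕ, Computable ℓ ∧ (∀ k, j ≤ ℓ k) ∧
      ∃ u, IsComputableReal u ∧ HasSum (fun k => (1 / 2) ^ (k + 1) * (ℓ k : ℝ)) (x + u) := by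
  obtain ⟨r, hr, hr_mono, hr_lim⟩ := hx
  obtain ⟨m, hm, v, hv, hmv⟩ := exists_nat_dyadic_hasSum_sub
    (computable_rat_sub.comp (hr.comp Computable.succ) hr) fun k => sub_nonneg.2 (hr_mono k)
  have hdiff : HasSum (fun k => (r (k + 1) - r k : ℝ)) (x - r 0) :=
    hasSum_sub_of_monotone_tendsto (r := fun k => (r k : ℝ))
      (monotone_nat_of_le_succ fun k => Rat.cast_le.2 (hr_mono k)) hr_lim
  have hj : HasSum (fun k : ℕ => (1 / 2) ^ (k + 1) * (j : ℝ)) j := by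
    simpa [div_eq_mul_inv, pow_succ, mul_comm, mul_left_comm, mul_assoc]
      using hasSum_geometric_two' (j : ℝ)
  have hconst (q : ℚ) : IsComputableReal q :=
    (UniformlyComputable.ratCast (Computable.const (α := Unit) q)).isComputableReal ()
  refine ⟨fun k => m k + j, Primrec.nat_add.to_comp.comp hm (Computable.const j),
    fun k => Nat.le_add_left j (m k), v + (j - r 0), hv.add ?_, ?_⟩
  · simpa only [Rat.cast_sub, Rat.cast_natCast] using hconst (j - r 0)
  · convert (hmv.add hdiff).add hj using 1
    · ext k
      push_cast
      ring
    · ring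

end LeftComputable

section FadingDensity

/-- The admissible fading densities: continuous even probability densities on `ℝ` that vanish on
`[-1, 1]`. -/
structure IsFadingDensity (f : ℝ → ℝ) : Prop where
  continuous : Continuous f
  even : ∀ α, f (-α) = f α
  nonneg : ∀ α, 0 ≤ f α
  integrable : Integrable f
  eq_zero_of_abs_le_one : ∀ α, |α| ≤ 1 → f α = 0
  integral_eq_one : ∫ α, f α = 1

/-- The Beta(2, 2) density `6 t (1 - t)`, extended by `0` outside `[0, 1]`. It is the profile from
which all fading densities below are built. -/
noncomputable def betaDensity (t : ℝ) : ℝ := max 0 (6 * t * (1 - t))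

/-- The even density of a random variable `α` for which `α ^ 2 / s - 1` has density
`betaDensity`. -/
noncomputable def fadingBump (s α : ℝ) : ℝ := |α| / s * betaDensity (α ^ 2 / s - 1)

theorem continuous_betaDensity : Continuous betaDensity := by
  unfold betaDensity
  fun_prop

theorem betaDensity_nonneg (t : ℝ) : 0 ≤ betaDensity t := le_max_left _ _

theorem betaDensity_le_two (t : ℝ) : betaDensity t ≤ 2 :=
  max_le zero_le_two (by nlinarith [sq_nonneg (2 * t - 1)])

theorem betaDensity_of_mem_Icc {t : ℝ} (ht : t ∈ Set.Icc (0 : ℝ) 1) :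
    betaDensity t = 6 * t * (1 - t) :=
  max_eq_right (mul_nonneg (mul_nonneg (by norm_num) ht.1) (sub_nonneg.2 ht.2))

theorem betaDensity_eq_zero {t : ℝ} (ht : t ∉ Set.Ioo (0 : ℝ) 1) : betaDensity t = 0 := by
  refine max_eq_left ?_
  by_contra! h
  exact ht ⟨by nlinarith [sq_nonneg t], by nlinarith [sq_nonneg (t - 1)]⟩

theorem integral_six_mul_mul_one_sub : ∫ t in (0 : ℝ)..1, 6 * t * (1 - t) = 1 := by
  calc ∫ t in (0 : ℝ)..1, 6 * t * (1 - t) = ∫ t in (0 : ℝ)..1, (6 * t - 6 * t ^ 2) := by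
        congr 1 with t
        ring
    _ = 1 := by
        rw [intervalIntegral.integral_sub (Continuous.intervalIntegrable (by fun_prop) _ _)
          (Continuous.intervalIntegrable (by fun_prop) _ _),
          intervalIntegral.integral_const_mul, intervalIntegral.integral_const_mul]
        norm_num

theorem integral_comp_sq_mul_abs (g : ℝ → ℝ) :
    ∫ α, g (α ^ 2) * |α| = ∫ v in Set.Ioi 0, g v := by
  have habs : ∫ α, g (α ^ 2) * |α| = 2 * ∫ α in Set.Ioi 0, g (α ^ 2) * α := by
    rw [← integral_comp_abs (f := fun α => g (α ^ 2) * α)]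
    simp only [sq_abs]
  rw [habs, ← integral_comp_rpow_Ioi_of_pos (g := g) two_pos, ← integral_const_mul]
  refine setIntegral_congr_fun measurableSet_Ioi fun α _ => ?_
  norm_num
  ring

theorem integral_mul_fadingBump {s : ℝ} (hs : 0 < s) (g : ℝ → ℝ) :
    ∫ α, g (α ^ 2) * fadingBump s α =
      ∫ t in (0 : ℝ)..1, g (s * (1 + t)) * (6 * t * (1 - t)) := by
  let h (w : ℝ) : ℝ := g (s * w) * betaDensity (w - 1)
  have hzero : ∀ w ∈ Set.Ioi (0 : ℝ) \ Set.Ioc 1 2, h w = 0 := fun w hw => by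
    simp only [h]
    rw [betaDensity_eq_zero fun hw' => hw.2 ⟨by linarith [hw'.1], by linarith [hw'.2]⟩, mul_zero]
  calc ∫ α, g (α ^ 2) * fadingBump s α = ∫ α, h (α ^ 2 / s) / s * |α| := by
        congr 1 with α
        simp only [fadingBump, h, mul_div_cancel₀ _ hs.ne']
        ring
    _ = s * ∫ w in Set.Ioi 0, h (s * w / s) / s := by
        rw [integral_comp_sq_mul_abs fun v => h (v / s) / s, ← smul_eq_mul,
          integral_comp_mul_left_Ioi' (fun v => h (v / s) / s) 0 hs, mul_zero]
    _ = ∫ w in Set.Ioi 0, h w := by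
        simp only [mul_div_cancel_left₀ _ hs.ne', integral_div, mul_div_cancel₀ _ hs.ne']
    _ = ∫ w in (1 : ℝ)..2, h w := by
        rw [intervalIntegral.integral_of_le one_le_two]
        exact setIntegral_eq_of_subset_of_forall_sdiff_eq_zero measurableSet_Ioi
          (fun w hw => zero_lt_one.trans hw.1) hzero
    _ = ∫ t in (0 : ℝ)..1, h (1 + t) := by
        rw [intervalIntegral.integral_comp_add_left]
        norm_num
    _ = ∫ t in (0 : ℝ)..1, g (s * (1 + t)) * (6 * t * (1 - t)) := by
        refine intervalIntegral.integral_congr fun t ht => ?_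
        rw [Set.uIcc_of_le zero_le_one] at ht
        simp only [h, add_sub_cancel_left, betaDensity_of_mem_Icc ht]

theorem continuous_fadingBump (s : ℝ) : Continuous (fadingBump s) :=
  (continuous_abs.div_const s).mul (continuous_betaDensity.comp (by fun_prop))

theorem fadingBump_nonneg {s : ℝ} (hs : 0 ≤ s) (α : ℝ) : 0 ≤ fadingBump s α :=
  mul_nonneg (div_nonneg (abs_nonneg α) hs) (betaDensity_nonneg _)

theorem fadingBump_eq_zero_of_sq_notMem_Ioo {s α : ℝ} (hs : 0 < s)
    (hα : α ^ 2 ∉ Set.Ioo s (2 * s)) : fadingBump s α = 0 := by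
  refine mul_eq_zero_of_right _ (betaDensity_eq_zero fun h => hα ⟨?_, ?_⟩)
  · simpa [lt_div_iff₀ hs] using h.1
  · rw [← div_lt_iff₀ hs]
    linarith [h.2]

theorem hasCompactSupport_fadingBump {s : ℝ} (hs : 0 < s) : HasCompactSupport (fadingBump s) :=
  .intro (isCompact_closedBall 0 (√(2 * s))) fun α hα =>
    fadingBump_eq_zero_of_sq_notMem_Ioo hs fun h => hα <| by
      rw [mem_closedBall_zero_iff, Real.norm_eq_abs]
      exact Real.abs_le_sqrt h.2.le

theorem fadingBump_le_four {s : ℝ} (hs : 1 ≤ s) (α : ℝ) : fadingBump s α ≤ 4 := by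
  have hs0 : 0 < s := zero_lt_one.trans_le hs
  by_cases hα : α ^ 2 ∈ Set.Ioo s (2 * s)
  · have hle : |α| / s ≤ 2 := by
      rw [div_le_iff₀ hs0]
      nlinarith [sq_abs α, hα.1, hα.2]
    calc fadingBump s α ≤ 2 * 2 :=
          mul_le_mul hle (betaDensity_le_two _) (betaDensity_nonneg _) zero_le_two
      _ = 4 := by norm_num
  · rw [fadingBump_eq_zero_of_sq_notMem_Ioo hs0 hα]
    norm_num

theorem isFadingDensity_fadingBump {s : ℝ} (hs : 1 ≤ s) : IsFadingDensity (fadingBump s) where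
  continuous := continuous_fadingBump s
  even α := by simp only [fadingBump, abs_neg, even_two.neg_pow]
  nonneg := fadingBump_nonneg (zero_le_one.trans hs)
  integrable := (continuous_fadingBump s).integrable_of_hasCompactSupport
    (hasCompactSupport_fadingBump (zero_lt_one.trans_le hs))
  eq_zero_of_abs_le_one α hα := fadingBump_eq_zero_of_sq_notMem_Ioo (zero_lt_one.trans_le hs)
    fun h => (hs.trans_lt h.1).not_ge ((sq_le_one_iff_abs_le_one α).2 hα)
  integral_eq_one := by
    simpa only [one_mul, integral_six_mul_mul_one_sub] using
      integral_mul_fadingBump (zero_lt_one.trans_le hs) fun _ => 1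

theorem integrable_tsum {ι X E : Type*} [Countable ι] [MeasurableSpace X] {μ : Measure X}
    [NormedAddCommGroup E] [CompleteSpace E] {F : ι → X → E} (hF : ∀ i, Integrable (F i) μ)
    (hsum : Summable fun i => ∫ a, ‖F i a‖ ∂μ) : Integrable (fun a => ∑' i, F i a) μ := by
  have hlt : ∫⁻ a, ∑' i, ‖F i a‖ₑ ∂μ < ⊤ := by
    rw [lintegral_tsum fun i => (hF i).1.enorm]
    simp only [← ofReal_integral_norm_eq_lintegral_enorm (hF _)]
    exact hsum.tsum_ofReal_lt_top
  have hsummable : ∀ᵐ a ∂μ, Summable fun i => F i a := by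
    filter_upwards [ae_lt_top' (AEMeasurable.tsum fun i => (hF i).1.enorm) hlt.ne] with a ha
    exact Summable.of_enorm ha.ne
  refine ⟨aestronglyMeasurable_of_tendsto_ae atTop
    (fun s => Finset.aestronglyMeasurable_fun_sum s fun i _ => (hF i).1)
    (hsummable.mono fun a ha => ha.hasSum), ?_⟩
  exact (lintegral_mono fun a => enorm_tsum_le_tsum_enorm).trans_lt hlt

section Mixture

variable {X : Type*} [MeasurableSpace X] {μ : Measure X} {p : ℕ → ℝ}

theorem integrable_and_hasSum_integral_mul_mixture {g : X → ℝ} {b : ℕ → X → ℝ} (hp : ∀ k, 0 ≤ p k)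
    (hg : ∀ a, 0 ≤ g a) (hb : ∀ k a, 0 ≤ b k a) (hgb : ∀ k, Integrable (fun a => g a * b k a) μ)
    (hsum : Summable fun k => p k * ∫ a, g a * b k a ∂μ) :
    Integrable (fun a => g a * ∑' k, p k * b k a) μ ∧
      HasSum (fun k => p k * ∫ a, g a * b k a ∂μ) (∫ a, g a * ∑' k, p k * b k a ∂μ) := by
  have hint (k : ℕ) : Integrable (fun a => p k * (g a * b k a)) μ := (hgb k).const_mul (p k)
  have hnorm : Summable fun k => ∫ a, ‖p k * (g a * b k a)‖ ∂μ := by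
    simpa only [Real.norm_of_nonneg (mul_nonneg (hp _) (mul_nonneg (hg _) (hb _ _))),
      integral_const_mul] using hsum
  simp only [← tsum_mul_left, mul_left_comm (g _), ← integral_const_mul]
  exact ⟨integrable_tsum hint hnorm, hasSum_integral_of_summable_integral_norm hint hnorm⟩

theorem IsFadingDensity.mixture {b : ℕ → ℝ → ℝ} {C : ℝ} (hb : ∀ k, IsFadingDensity (b k))
    (hC : ∀ k α, b k α ≤ C) (hp : ∀ k, 0 ≤ p k) (hp1 : HasSum p 1) :
    IsFadingDensity fun α => ∑' k, p k * b k α := by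
  obtain ⟨hint, hmass⟩ := integrable_and_hasSum_integral_mul_mixture (μ := volume) (g := fun _ => 1)
    hp (fun _ => zero_le_one) (fun k => (hb k).nonneg)
    (by simpa only [one_mul] using fun k => (hb k).integrable)
    (by simpa only [one_mul, (hb _).integral_eq_one, mul_one] using hp1.summable)
  simp only [one_mul, (hb _).integral_eq_one, mul_one] at hint hmass
  refine ⟨?_, fun α => ?_, fun α => ?_, hint, fun α hα => ?_, hmass.unique hp1⟩
  · refine continuous_tsum (fun k => (hb k).continuous.const_mul (p k)) (hp1.summable.mul_right C)
      fun k α => ?_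
    rw [Real.norm_of_nonneg (mul_nonneg (hp k) ((hb k).nonneg α))]
    exact mul_le_mul_of_nonneg_left (hC k α) (hp k)
  · simp only [(hb _).even]
  · exact tsum_nonneg fun k => mul_nonneg (hp k) ((hb k).nonneg α)
  · simp only [(hb _).eq_zero_of_abs_le_one α hα, mul_zero, tsum_zero]

end Mixture

end FadingDensity

section ErgodicCapacity

/-- The ergodic capacity of the fast-fading Gaussian channel with fading density `f`, noise power
`σsq` and power constraint `P`. -/
noncomputable def ergodicCapacity (f : ℝ → ℝ) (σsq P : ℝ) : ℝ :=
  ∫ α, Real.logb 2 (1 + P * α ^ 2 / σsq) * f α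

/-- The amount by which the ergodic capacity of `fadingBump (σsq * 2 ^ ℓ)` exceeds `ℓ`, for any
noise power `σsq`. -/
noncomputable def rateOffset (P : ℝ) (ℓ : ℕ) : ℝ :=
  ∫ t in (0 : ℝ)..1, Real.logb 2 ((1 / 2) ^ ℓ + P * (1 + t)) * (6 * t * (1 - t))

variable {P σsq : ℝ}

theorem logb_two_one_add_two_pow_mul {y : ℝ} (hy : 0 < y) (ℓ : ℕ) :
    Real.logb 2 (1 + 2 ^ ℓ * y) = ℓ + Real.logb 2 ((1 / 2) ^ ℓ + y) := by
  have hfactor : 1 + 2 ^ ℓ * y = 2 ^ ℓ * ((1 / 2) ^ ℓ + y) := by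
    rw [mul_add, ← mul_pow]
    norm_num
  rw [hfactor, Real.logb_mul (by positivity) (by positivity), Real.logb_pow,
    Real.logb_self_eq_one one_lt_two, mul_one]

theorem mem_Icc_half_pow_add_mul (hP : 0 < P) (ℓ : ℕ) {t : ℝ} (ht : t ∈ Set.Icc (0 : ℝ) 1) :
    (1 / 2) ^ ℓ + P * (1 + t) ∈ Set.Icc P (1 + 2 * P) := by
  have hpos : (0 : ℝ) < (1 / 2) ^ ℓ := by positivity
  have hle : ((1 : ℝ) / 2) ^ ℓ ≤ 1 := pow_le_one₀ (by norm_num) (by norm_num)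
  constructor <;> nlinarith [ht.1, ht.2]

theorem ergodicCapacity_fadingBump (hσ : 0 < σsq) (hP : 0 < P) (ℓ : ℕ) :
    ergodicCapacity (fadingBump (σsq * 2 ^ ℓ)) σsq P = ℓ + rateOffset P ℓ := by
  have hlog : ∀ t ∈ Set.uIcc (0 : ℝ) 1,
      Real.logb 2 (1 + P * (σsq * 2 ^ ℓ * (1 + t)) / σsq) * (6 * t * (1 - t)) =
        ℓ * (6 * t * (1 - t)) +
          Real.logb 2 ((1 / 2) ^ ℓ + P * (1 + t)) * (6 * t * (1 - t)) := fun t ht => by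
    rw [Set.uIcc_of_le zero_le_one] at ht
    have hy : 0 < P * (1 + t) := mul_pos hP (by linarith [ht.1])
    rw [← add_mul, ← logb_two_one_add_two_pow_mul hy]
    congr 3
    field_simp
  have hint : IntervalIntegrable
      (fun t => Real.logb 2 ((1 / 2) ^ ℓ + P * (1 + t)) * (6 * t * (1 - t))) volume 0 1 := by
    refine ContinuousOn.intervalIntegrable_of_Icc zero_le_one (.mul ?_ (by fun_prop))
    exact .logb (by fun_prop) fun t ht => (hP.trans_le (mem_Icc_half_pow_add_mul hP ℓ ht).1).ne'
  rw [ergodicCapacity,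
    integral_mul_fadingBump (by positivity) fun v => Real.logb 2 (1 + P * v / σsq),
    intervalIntegral.integral_congr hlog, intervalIntegral.integral_add
      (Continuous.intervalIntegrable (by fun_prop) _ _) hint, intervalIntegral.integral_const_mul,
    integral_six_mul_mul_one_sub, mul_one, rateOffset]

theorem exists_abs_logb_two_le {a b : ℝ} (ha : 0 < a) :
    ∃ M : ℕ, ∀ y ∈ Set.Icc a b, |Real.logb 2 y| ≤ M := by
  obtain ⟨M, hM⟩ := exists_nat_ge (max |Real.logb 2 a| |Real.logb 2 b|)
  refine ⟨M, fun y hy => (abs_le_max_abs_abs ?_ ?_).trans hM⟩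
  · exact Real.logb_le_logb_of_le one_lt_two ha hy.1
  · exact Real.logb_le_logb_of_le one_lt_two (ha.trans_le hy.1) hy.2

theorem lipschitzOnWith_mul_of_bounded {X : Type*} [PseudoMetricSpace X] {s : Set X} {f g : X → ℝ}
    {K L A B : NNReal} (hf : LipschitzOnWith K f s) (hg : LipschitzOnWith L g s)
    (hfA : ∀ x ∈ s, |f x| ≤ A) (hgB : ∀ x ∈ s, |g x| ≤ B) :
    LipschitzOnWith (K * B + A * L) (fun x => f x * g x) s := by
  refine .of_dist_le_mul fun x hx y hy => ?_
  have hfK := hf.dist_le_mul x hx y hy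
  have hgL := hg.dist_le_mul x hx y hy
  rw [Real.dist_eq] at hfK hgL ⊢
  calc |f x * g x - f y * g y| = |(f x - f y) * g x + f y * (g x - g y)| := by ring_nf
    _ ≤ |f x - f y| * |g x| + |f y| * |g x - g y| := by
        simpa only [abs_mul] using abs_add_le ((f x - f y) * g x) (f y * (g x - g y))
    _ ≤ K * dist x y * B + A * (L * dist x y) := by
        gcongr
        exacts [hgB x hx, hfA y hy]
    _ = (K * B + A * L : NNReal) * dist x y := by
        push_cast
        ring

theorem abs_six_mul_mul_one_sub_le {t : ℝ} (ht : t ∈ Set.Icc (0 : ℝ) 1) :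
    |6 * t * (1 - t)| ≤ 2 := by
  rw [← betaDensity_of_mem_Icc ht, abs_of_nonneg (betaDensity_nonneg t)]
  exact betaDensity_le_two t

theorem lipschitzOnWith_six_mul_mul_one_sub :
    LipschitzOnWith 6 (fun t : ℝ => 6 * t * (1 - t)) (Set.Icc 0 1) := by
  refine .of_dist_le_mul fun t ht t' ht' => ?_
  have hfactor : 6 * t * (1 - t) - 6 * t' * (1 - t') = (1 - t - t') * (6 * (t - t')) := by ring
  have hle : |1 - t - t'| ≤ 1 := abs_le.2 ⟨by linarith [ht.2, ht'.2], by linarith [ht.1, ht'.1]⟩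
  rw [Real.dist_eq, Real.dist_eq, hfactor, abs_mul, abs_mul 6,
    abs_of_pos (by norm_num : (0 : ℝ) < 6)]
  exact mul_le_of_le_one_left (by positivity) hle

theorem lipschitzOnWith_logb_two_half_pow_add (hP : 0 < P) (ℓ : ℕ) :
    LipschitzOnWith 2 (fun t => Real.logb 2 ((1 / 2) ^ ℓ + P * (1 + t))) (Set.Icc 0 1) := by
  refine .of_dist_le_mul fun t ht t' ht' => ?_
  rw [Real.dist_eq, Real.dist_eq]
  refine (abs_logb_two_sub_le hP (mem_Icc_half_pow_add_mul hP ℓ ht).1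
    (mem_Icc_half_pow_add_mul hP ℓ ht').1).trans_eq ?_
  rw [add_sub_add_left_eq_sub, ← mul_sub, add_sub_add_left_eq_sub, abs_mul, abs_of_pos hP,
    NNReal.coe_ofNat]
  field_simp

theorem exists_abs_rateOffset_le (hP : 0 < P) : ∃ C : ℕ, ∀ ℓ, |rateOffset P ℓ| ≤ C := by
  obtain ⟨M, hM⟩ := exists_abs_logb_two_le (b := 1 + 2 * P) hP
  refine ⟨M * 2, fun ℓ => ?_⟩
  have hbound : ∀ t ∈ Set.uIoc (0 : ℝ) 1,
      ‖Real.logb 2 ((1 / 2) ^ ℓ + P * (1 + t)) * (6 * t * (1 - t))‖ ≤ M * 2 := fun t ht => by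
    rw [Set.uIoc_of_le zero_le_one] at ht
    have ht' := Set.Ioc_subset_Icc_self ht
    rw [norm_mul]
    exact mul_le_mul (hM _ (mem_Icc_half_pow_add_mul hP ℓ ht')) (abs_six_mul_mul_one_sub_le ht')
      (norm_nonneg _) M.cast_nonneg
  simpa [rateOffset] using intervalIntegral.norm_integral_le_of_norm_le_const hbound

theorem uniformlyComputable_logb_two_half_pow_add (hP : 0 < P) (hPc : IsComputableReal P) :
    UniformlyComputable fun p : ℕ × ℕ × ℕ =>
      Real.logb 2 ((1 / 2) ^ p.1 + P * (1 + p.2.1 / 2 ^ p.2.2)) := by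
  let y (p : ℕ × ℕ × ℕ) : ℝ := 2 ^ p.1 * (P * (1 + p.2.1 * (1 / 2) ^ p.2.2))
  have hpow : UniformlyComputable fun p : ℕ × ℕ × ℕ => ((2 ^ p.1 : ℕ) : ℝ) :=
    .natCast (primrec_nat_pow.to_comp.comp (Computable.const 2) Computable.fst)
  have hone : UniformlyComputable fun _ : ℕ × ℕ × ℕ => ((1 : ℕ) : ℝ) :=
    .natCast (Computable.const 1)
  have hdyadic : UniformlyComputable fun p : ℕ × ℕ × ℕ => (p.2.1 * (1 / 2) ^ p.2.2 : ℝ) :=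
    (UniformlyComputable.natCast (Computable.fst.comp Computable.snd)).mul
      (.half_pow (Computable.snd.comp Computable.snd))
  have hy : UniformlyComputable fun p => 1 + y p := by
    simpa only [Nat.cast_one, Nat.cast_pow, Nat.cast_ofNat] using
      hone.add (hpow.mul (hPc.uniformlyComputable_const.mul (hone.add hdyadic)))
  have hlog := (hy.logb_two fun p => le_add_of_nonneg_right (by positivity)).sub
    (.natCast Computable.fst)
  convert hlog using 2 with p
  rw [logb_two_one_add_two_pow_mul (by positivity), add_sub_cancel_left]
  simp only [one_div_pow, mul_one_div]

theorem uniformlyComputable_six_mul_mul_one_sub :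
    UniformlyComputable fun p : ℕ × ℕ => 6 * (p.1 / 2 ^ p.2 : ℝ) * (1 - p.1 / 2 ^ p.2) := by
  have hconst (n : ℕ) : UniformlyComputable fun _ : ℕ × ℕ => (n : ℝ) :=
    .natCast (Computable.const n)
  have hdyadic : UniformlyComputable fun p : ℕ × ℕ => (p.1 * (1 / 2) ^ p.2 : ℝ) :=
    (UniformlyComputable.natCast Computable.fst).mul (.half_pow Computable.snd)
  simpa only [Nat.cast_one, Nat.cast_ofNat, one_div_pow, mul_one_div] using
    ((hconst 6).mul hdyadic).mul ((hconst 1).sub hdyadic)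

theorem uniformlyComputable_rateOffset (hP : 0 < P) (hPc : IsComputableReal P) :
    UniformlyComputable (rateOffset P) := by
  obtain ⟨M, hM⟩ := exists_abs_logb_two_le (b := 1 + 2 * P) hP
  refine UniformlyComputable.integral (C := fun _ => 2 * 2 + M * 6)
    ((uniformlyComputable_logb_two_half_pow_add hP hPc).mul
      (uniformlyComputable_six_mul_mul_one_sub.comp Computable.snd))
    (Computable.const _) fun ℓ => ?_
  simpa only [Nat.cast_add, Nat.cast_mul, Nat.cast_ofNat] using
    lipschitzOnWith_mul_of_bounded (A := M) (B := 2) (lipschitzOnWith_logb_two_half_pow_add hP ℓ)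
      lipschitzOnWith_six_mul_mul_one_sub (fun t ht => hM _ (mem_Icc_half_pow_add_mul hP ℓ ht))
      fun t ht => abs_six_mul_mul_one_sub_le ht

theorem exists_hasSum_half_pow_mul_rateOffset {ℓ : ℕ → ℕ} (hℓ : Computable ℓ) (hP : 0 < P)
    (hPc : IsComputableReal P) :
    ∃ u, IsComputableReal u ∧ HasSum (fun k => (1 / 2) ^ (k + 1) * rateOffset P (ℓ k)) u := by
  obtain ⟨C, hC⟩ := exists_abs_rateOffset_le hP
  let h (k : ℕ) : ℝ := (1 / 2) ^ (k + 1) * rateOffset P (ℓ k)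
  have hh : UniformlyComputable h := (UniformlyComputable.half_pow Computable.succ).mul
    ((uniformlyComputable_rateOffset hP hPc).comp hℓ)
  have hh_bound (k : ℕ) : |h k| ≤ C * (1 / 2) ^ k := by
    rw [abs_mul, abs_of_nonneg (by positivity), mul_comm]
    exact mul_le_mul (hC _) (pow_le_pow_of_le_one (by norm_num) (by norm_num) k.le_succ)
      (by positivity) C.cast_nonneg
  exact hh.exists_hasSum hh_bound

theorem integrable_and_hasSum_ergodicCapacity_mixture {p : ℕ → ℝ} {b : ℕ → ℝ → ℝ} (hσ : 0 < σsq)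
    (hP : 0 < P) (hp : ∀ k, 0 ≤ p k) (hb : ∀ k, IsFadingDensity (b k))
    (hb_supp : ∀ k, HasCompactSupport (b k))
    (hsum : Summable fun k => p k * ergodicCapacity (b k) σsq P) :
    Integrable (fun α => Real.logb 2 (1 + P * α ^ 2 / σsq) * ∑' k, p k * b k α) ∧
      HasSum (fun k => p k * ergodicCapacity (b k) σsq P)
        (ergodicCapacity (fun α => ∑' k, p k * b k α) σsq P) := by
  have hone (α : ℝ) : 1 ≤ 1 + P * α ^ 2 / σsq := le_add_of_nonneg_right (by positivity)
  have hlog : Continuous fun α : ℝ => Real.logb 2 (1 + P * α ^ 2 / σsq) :=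
    .logb (by fun_prop) fun α => (zero_lt_one.trans_le (hone α)).ne'
  exact integrable_and_hasSum_integral_mul_mixture hp
    (fun α => Real.logb_nonneg one_lt_two (hone α)) (fun k => (hb k).nonneg)
    (fun k => (hlog.mul (hb k).continuous).integrable_of_hasCompactSupport (hb_supp k).mul_left)
    hsum

theorem LeftComputable.exists_isFadingDensity {x : ℝ} (hx : LeftComputable x) (hσ : 0 < σsq) :
    ∃ f, IsFadingDensity f ∧ ∀ P, 0 < P → IsComputableReal P →
      Integrable (fun α => Real.logb 2 (1 + P * α ^ 2 / σsq) * f α) ∧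
        ∃ u, IsComputableReal u ∧ ergodicCapacity f σsq P = x + u := by
  obtain ⟨j, hj⟩ := pow_unbounded_of_one_lt σsq⁻¹ one_lt_two
  obtain ⟨ℓ, hℓ, hjℓ, v, hv, hℓ_sum⟩ := hx.exists_hasSum_dyadic j
  have hscale (k : ℕ) : 1 ≤ σsq * 2 ^ ℓ k := by
    rw [← inv_le_iff_one_le_mul₀' hσ]
    exact hj.le.trans (pow_le_pow_right₀ one_le_two (hjℓ k))
  have hbump (k : ℕ) := isFadingDensity_fadingBump (hscale k)
  have hweight (k : ℕ) : (0 : ℝ) ≤ (1 / 2) ^ (k + 1) := by positivity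
  have hweight_sum : HasSum (fun k : ℕ => (1 / 2 : ℝ) ^ (k + 1)) 1 := by
    simpa [pow_succ, div_eq_mul_inv, mul_comm] using hasSum_geometric_two' 1
  refine ⟨_, .mixture hbump (fun k => fadingBump_le_four (hscale k)) hweight hweight_sum,
    fun P hP hPc => ?_⟩
  obtain ⟨w, hw, hoffset_sum⟩ := exists_hasSum_half_pow_mul_rateOffset hℓ hP hPc
  have hrate_sum : HasSum
      (fun k => (1 / 2) ^ (k + 1) * ergodicCapacity (fadingBump (σsq * 2 ^ ℓ k)) σsq P)
      (x + (v + w)) := by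
    simpa only [ergodicCapacity_fadingBump hσ hP, mul_add, add_assoc] using
      hℓ_sum.add hoffset_sum
  obtain ⟨hint, hsum⟩ := integrable_and_hasSum_ergodicCapacity_mixture hσ hP hweight hbump
    (fun k => hasCompactSupport_fadingBump (zero_lt_one.trans_le (hscale k))) hrate_sum.summable
  exact ⟨hint, v + w, hv.add hw, hsum.unique hrate_sum⟩

end ErgodicCapacity

section SecrecyCapacity

/-- The secrecy capacity `C_S(P)` of the fast-fading Gaussian wiretap channel, whose legitimate
channel has fading density `f₁` and noise power `σ1sq`, and whose wiretapper has `f₂` and `σ2sq`. -/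
noncomputable def secrecyCapacity (f₁ f₂ : ℝ → ℝ) (σ1sq σ2sq P : ℝ) : ℝ :=
  ergodicCapacity f₁ σ1sq P - ergodicCapacity f₂ σ2sq P

theorem stmt4_general {x₁ x₂ σ1sq σ2sq : ℝ} (hx₁ : LeftComputable x₁) (hx₂ : LeftComputable x₂)
    (hσ1 : 0 < σ1sq) (hσ2 : 0 < σ2sq) :
    ∃ f₁ f₂ : ℝ → ℝ, IsFadingDensity f₁ ∧ IsFadingDensity f₂ ∧
      ∀ P : ℝ, 0 < P → IsComputableReal P →
        Integrable (fun α => Real.logb 2 (1 + P * α ^ 2 / σ1sq) * f₁ α) ∧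
        Integrable (fun α => Real.logb 2 (1 + P * α ^ 2 / σ2sq) * f₂ α) ∧
        ∃ u : ℝ, IsComputableReal u ∧
          secrecyCapacity f₁ f₂ σ1sq σ2sq P = x₁ - x₂ + u ∧
          Delta2 (secrecyCapacity f₁ f₂ σ1sq σ2sq P) ∧
          (LeftComputable (secrecyCapacity f₁ f₂ σ1sq σ2sq P) ↔ LeftComputable (x₁ - x₂)) ∧
          (RightComputable (secrecyCapacity f₁ f₂ σ1sq σ2sq P) ↔ RightComputable (x₁ - x₂)) := by
  obtain ⟨f₁, hf₁, hcap₁⟩ := hx₁.exists_isFadingDensity hσ1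
  obtain ⟨f₂, hf₂, hcap₂⟩ := hx₂.exists_isFadingDensity hσ2
  refine ⟨f₁, f₂, hf₁, hf₂, fun P hP hPc => ?_⟩
  obtain ⟨hint₁, u₁, hu₁, hcap₁⟩ := hcap₁ P hP hPc
  obtain ⟨hint₂, u₂, hu₂, hcap₂⟩ := hcap₂ P hP hPc
  have hu : IsComputableReal (u₁ - u₂) := hu₁.sub hu₂
  have hcap : secrecyCapacity f₁ f₂ σ1sq σ2sq P = x₁ - x₂ + (u₁ - u₂) := by
    rw [secrecyCapacity, hcap₁, hcap₂, add_sub_add_comm]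
  refine ⟨hint₁, hint₂, u₁ - u₂, hu, hcap, ?_⟩
  rw [hcap]
  exact ⟨⟨x₁ + (u₁ - u₂), x₂, hx₁.add hu.leftComputable, hx₂, by ring⟩,
    leftComputable_add_iff hu, rightComputable_add_iff hu⟩

end SecrecyCapacity

/-- Theorem 1 of the paper: for any `x ∈ Δ₂`, `x > 0`, with `x ∉ Σ₁` and `x ∉ Π₁`,
and any computable noise powers `σ₁², σ₂² > 0`, there are continuous, even,
nonnegative integrable fading densities `f₁, f₂` vanishing on `[-1,1]` such that
for every computable power constraint `P > 0` the secrecy capacity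
`C_S(P) = ∫ log₂(1 + Pα²/σ₁²) f₁ - ∫ log₂(1 + Pα²/σ₂²) f₂` equals `x + u(P)` for
some computable real `u(P)`; hence `C_S(P) ∈ Δ₂ \ (Σ₁ ∪ Π₁)`. -/
theorem stmt4 (x x₁ x₂ : ℝ) (hxpos : 0 < x)
    (hx₁ : LeftComputable x₁) (hx₂ : LeftComputable x₂)
    (hx₁pos : 0 < x₁) (hx₂pos : 0 < x₂) (hxeq : x = x₁ - x₂)
    (hxnl : ¬ LeftComputable x) (hxnr : ¬ RightComputable x)
    (σ1sq σ2sq : ℝ) (hσ1 : 0 < σ1sq) (hσ2 : 0 < σ2sq)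
    (hσ1c : IsComputableReal σ1sq) (hσ2c : IsComputableReal σ2sq) :
    ∃ f₁ f₂ : ℝ → ℝ,
      Continuous f₁ ∧ Continuous f₂ ∧
      (∀ α, f₁ (-α) = f₁ α) ∧ (∀ α, f₂ (-α) = f₂ α) ∧
      (∀ α, 0 ≤ f₁ α) ∧ (∀ α, 0 ≤ f₂ α) ∧
      Integrable f₁ ∧ Integrable f₂ ∧
      (∀ α, |α| ≤ 1 → f₁ α = 0) ∧ (∀ α, |α| ≤ 1 → f₂ α = 0) ∧
      (∫ α, f₁ α) = 1 ∧ (∫ α, f₂ α) = 1 ∧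
      ∀ P : ℝ, 0 < P → IsComputableReal P →
        Integrable (fun α => Real.logb 2 (1 + P * α ^ 2 / σ1sq) * f₁ α) ∧
        Integrable (fun α => Real.logb 2 (1 + P * α ^ 2 / σ2sq) * f₂ α) ∧
        ∃ u : ℝ, IsComputableReal u ∧
          (∫ α, Real.logb 2 (1 + P * α ^ 2 / σ1sq) * f₁ α) -
              (∫ α, Real.logb 2 (1 + P * α ^ 2 / σ2sq) * f₂ α) = x + u ∧
          Delta2 ((∫ α, Real.logb 2 (1 + P * α ^ 2 / σ1sq) * f₁ α) -
              (∫ α, Real.logb 2 (1 + P * α ^ 2 / σ2sq) * f₂ α)) ∧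
          ¬ LeftComputable ((∫ α, Real.logb 2 (1 + P * α ^ 2 / σ1sq) * f₁ α) -
              (∫ α, Real.logb 2 (1 + P * α ^ 2 / σ2sq) * f₂ α)) ∧
          ¬ RightComputable ((∫ α, Real.logb 2 (1 + P * α ^ 2 / σ1sq) * f₁ α) -
              (∫ α, Real.logb 2 (1 + P * α ^ 2 / σ2sq) * f₂ α)) := by
  subst hxeq
  obtain ⟨f₁, f₂, h₁, h₂, h⟩ := stmt4_general hx₁ hx₂ hσ1 hσ2
  refine ⟨f₁, f₂, h₁.continuous, h₂.continuous, h₁.even, h₂.even, h₁.nonneg, h₂.nonneg,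
    h₁.integrable, h₂.integrable, h₁.eq_zero_of_abs_le_one, h₂.eq_zero_of_abs_le_one,
    h₁.integral_eq_one, h₂.integral_eq_one, fun P hP hPc => ?_⟩
  obtain ⟨hint₁, hint₂, u, hu, hcap, hΔ, hleft, hright⟩ := h P hP hPc
  exact ⟨hint₁, hint₂, u, hu, hcap, hΔ, mt hleft.1 hxnl, mt hright.1 hxnr⟩
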